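/- Let (W, S) be an arbitrary Coxeter system and let w ∈ W be fully commutative. Then the elements of the left descent set 𝓛(w) pairwise commute, and the elements of the right descent set 𝓡(w) pairwise commute; equivalently, for s, t ∈ S with m(s,t) ≥ 3 it is impossible that both ℓ(sw) < ℓ(w) and ℓ(tw) < ℓ(w), and likewise on the right. -/

import Mathlib

open CoxeterSystem

variable {B W : Type*} [Group W] {M : CoxeterMatrix B} (cs : CoxeterSystem M W)

/-- `m(s,t) ≥ 3`: `s` and `t` are distinct noncommuting generators
(`M s t = 0` encodes `m(s,t) = ∞`). -/
def Noncomm (M : CoxeterMatrix B) (s t : B) : Prop := M s t = 0 ∨ 3 ≤ M s t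

/-- The longest element `w_{st}` of the rank-2 parabolic subgroup `⟨s,t⟩`
(meaningful when `3 ≤ M s t < ∞`). -/
def longest (s t : B) : W := cs.wordProd (alternatingWord s t (M s t))

/-- `w` is complex: it admits a reduced factorization `x₁ · w_{st} · x₂` where `w_{st}`
is the longest element of a rank-2 parabolic subgroup `⟨s,t⟩` with `3 ≤ m(s,t) < ∞`. -/
def IsComplex (w : W) : Prop :=
  ∃ s t : B, 3 ≤ M s t ∧ ∃ x₁ x₂ : W,
    w = x₁ * longest cs s t * x₂ ∧
    cs.length w = cs.length x₁ + cs.length (longest cs s t : W) + cs.length x₂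

/-- `w` is fully commutative, i.e. `w ∈ W_c`. -/
def FullyComm (w : W) : Prop := ¬ IsComplex cs w

/-- `x` is weakly complex: `x` is complex and `x = s·u` reduced with `u` fully commutative. -/
def IsWeaklyComplex (x : W) : Prop :=
  IsComplex cs x ∧ ∃ (s : B) (u : W), FullyComm cs u ∧ x = cs.simple s * u ∧
    cs.length x = 1 + cs.length u

/-- The alternating product `t s t s ⋯` with `k` factors, beginning with `t`. -/
def altProd (t s : B) (k : ℕ) : W :=
  cs.wordProd ((List.range k).map (fun i => if i % 2 = 0 then t else s))

/-- The left descent set `𝓛(w)`. -/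
def leftDescents (w : W) : Set B := {i | cs.IsLeftDescent w i}

/-- The right descent set `𝓡(w)`. -/
def rightDescents (w : W) : Set B := {i | cs.IsRightDescent w i}

/-- `w` is a reduced product of distinct pairwise commuting generators. -/
def IsCommProd (w : W) : Prop :=
  ∃ l : List B, l.Nodup ∧ (∀ u ∈ l, ∀ u' ∈ l, u ≠ u' → M u u' = 2) ∧
    cs.IsReduced l ∧ w = cs.wordProd l

/-- `y` is left star reducible to `x` with respect to the pair `{s,t}`:
`x` and `y` lie in the same left `{s,t}`-string and `ℓ(x) = ℓ(y) − 1`. -/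
def LeftStarReducible (s t : B) (y x : W) : Prop :=
  Noncomm M s t ∧
  ((cs.IsLeftDescent y s ∧ ¬ cs.IsLeftDescent y t ∧ x = cs.simple s * y ∧
      cs.IsLeftDescent x t) ∨
   (cs.IsLeftDescent y t ∧ ¬ cs.IsLeftDescent y s ∧ x = cs.simple t * y ∧
      cs.IsLeftDescent x s))

/-- `y` is right star reducible to `x` with respect to the pair `{s,t}`. -/
def RightStarReducible (s t : B) (y x : W) : Prop :=
  Noncomm M s t ∧
  ((cs.IsRightDescent y s ∧ ¬ cs.IsRightDescent y t ∧ x = y * cs.simple s ∧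
      cs.IsRightDescent x t) ∨
   (cs.IsRightDescent y t ∧ ¬ cs.IsRightDescent y s ∧ x = y * cs.simple t ∧
      cs.IsRightDescent x s))

/-- `y` is star reducible to `x`: there is a (possibly empty) chain of left and right
star reductions from `y` to `x`. -/
def StarReducible (y x : W) : Prop :=
  Relation.ReflTransGen
    (fun a b => ∃ s t : B, LeftStarReducible cs s t a b ∨ RightStarReducible cs s t a b) y x

/-- Property F: every fully commutative element is star reducible to a reduced product of
distinct pairwise commuting generators. -/
def PropertyF : Prop := ∀ w : W, FullyComm cs w → ∃ x : W, StarReducible cs w x ∧ IsCommProd cs x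

/-- `n(w)`: the maximum `k` such that `w` admits a reduced factorization `w = w₁·w₂·w₃`
with `w₂` a reduced product of `k` distinct pairwise commuting generators. -/
noncomputable def nval (w : W) : ℕ :=
  sSup {k | ∃ w₁ w₂ w₃ : W, w = w₁ * w₂ * w₃ ∧
    cs.length w = cs.length w₁ + cs.length w₂ + cs.length w₃ ∧
    IsCommProd cs w₂ ∧ cs.length w₂ = k}

/-- The Bruhat order: `x ≤ w` iff some reduced word for `w` has a subword that is a
reduced word for `x`. -/
def BruhatLE (x w : W) : Prop :=
  ∃ l l' : List B, cs.IsReduced l ∧ cs.wordProd l = w ∧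
    l'.Sublist l ∧ cs.IsReduced l' ∧ cs.wordProd l' = x

/-- `w = wI · wII` is the coset decomposition of `w` with respect to `I = {s,t}`:
`wI ∈ W_I`, `𝓛(wII) ∩ I = ∅` and `ℓ(w) = ℓ(wI) + ℓ(wII)`. -/
def CosetDecompL (s t : B) (w wI wII : W) : Prop :=
  w = wI * wII ∧ wI ∈ Subgroup.closure {cs.simple s, cs.simple t} ∧
  ¬ cs.IsLeftDescent wII s ∧ ¬ cs.IsLeftDescent wII t ∧
  cs.length w = cs.length wI + cs.length wII

/-- `w = wII · wI` is the right coset decomposition of `w` with respect to `I = {s,t}`: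
`wI ∈ W_I`, `𝓡(wII) ∩ I = ∅` and `ℓ(w) = ℓ(wII) + ℓ(wI)`. -/
def CosetDecompR (s t : B) (w wII wI : W) : Prop :=
  w = wII * wI ∧ wI ∈ Subgroup.closure {cs.simple s, cs.simple t} ∧
  ¬ cs.IsRightDescent wII s ∧ ¬ cs.IsRightDescent wII t ∧
  cs.length w = cs.length wII + cs.length wI

/-- `k_ε(J) = (−1)^{|J ∩ ε⁻¹(0)|}` for a set `J` of generators. -/
noncomputable def kSet (ε : B → Bool) (J : Set B) : ℤ :=
  (-1) ^ (J ∩ {i | ε i = false}).ncard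

/-- `k_ε(w) = k_ε(𝓛(w)) · k_ε(𝓡(w))`. -/
noncomputable def kElt (ε : B → Bool) (w : W) : ℤ :=
  kSet ε (leftDescents cs w) * kSet ε (rightDescents cs w)

namespace CoxeterMatrix

variable (M)

/-- The coroot functional of `i`: the pairing `v ↦ 2⟨eᵢ, v⟩` for the standard bilinear form
`⟨eᵢ, eⱼ⟩ = -cos (π / M i j)`. -/
noncomputable def geomCoroot (i : B) : Module.Dual ℝ (B →₀ ℝ) :=
  Finsupp.linearCombination ℝ fun j => -2 * Real.cos (Real.pi / M i j)

theorem geomCoroot_single (i j : B) :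
    M.geomCoroot i (Finsupp.single j 1) = -2 * Real.cos (Real.pi / M i j) := by
  simp [geomCoroot]

theorem geomCoroot_self (i : B) : M.geomCoroot i (Finsupp.single i 1) = 2 := by
  simp [geomCoroot_single]

/-- The reflection attached to `i` in the geometric representation. -/
noncomputable def geomReflection (i : B) : (B →₀ ℝ) ≃ₗ[ℝ] (B →₀ ℝ) :=
  Module.reflection (M.geomCoroot_self i)

theorem geomCoroot_mul_geomCoroot_sub_two (i j : B) :
    M.geomCoroot i (Finsupp.single j 1) * M.geomCoroot j (Finsupp.single i 1) - 2 =
      2 * Real.cos (2 * (Real.pi / M i j)) := by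
  rw [geomCoroot_single, geomCoroot_single, M.symmetric j i, Real.cos_two_mul]
  ring

theorem sin_two_mul_pi_div_pos {m : ℕ} (hm : 3 ≤ m) : 0 < Real.sin (2 * (Real.pi / m)) := by
  have hm' : (3 : ℝ) ≤ m := by exact_mod_cast hm
  have hpi := Real.pi_pos
  apply Real.sin_pos_of_pos_of_lt_pi
  · positivity
  · rw [← mul_div_assoc, div_lt_iff₀ (by linarith)]
    nlinarith

theorem cos_pi_div_pos {m : ℕ} (hm : 3 ≤ m) : 0 < Real.cos (Real.pi / m) := by
  have h := sin_two_mul_pi_div_pos hm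
  have hm' : (3 : ℝ) ≤ m := by exact_mod_cast hm
  have hpi := Real.pi_pos
  rw [Real.sin_two_mul] at h
  have : 0 < Real.sin (Real.pi / m) := by
    apply Real.sin_pos_of_pos_of_lt_pi
    · positivity
    · rw [div_lt_iff₀ (by linarith)]
      nlinarith
  nlinarith

open Polynomial.Chebyshev in
/-- The geometric reflections satisfy the Coxeter relations. -/
theorem isLiftable_geomReflection : M.IsLiftable M.geomReflection := by
  intro i j
  by_cases hij : i = j
  · subst hij
    ext1 v
    simp [geomReflection, Module.involutive_reflection (M.geomCoroot_self i) v]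
  have hne1 : M i j ≠ 1 := M.off_diagonal i j hij
  apply LinearEquiv.ext
  intro v
  have formula := Module.reflection_mul_reflection_pow_apply (M.geomCoroot_self i)
    (M.geomCoroot_self j) (M i j) v _ (M.geomCoroot_mul_geomCoroot_sub_two i j).symm
  rw [geomReflection, geomReflection, formula]
  obtain h0 | h2 | h3 : M i j = 0 ∨ M i j = 2 ∨ 3 ≤ M i j := by lia
  · rw [← formula]
    simp [h0]
  · have h2' : M j i = 2 := by rw [M.symmetric]; exact h2
    simp only [geomCoroot_single, h2, h2']
    rw [Nat.cast_ofNat, mul_div_cancel₀ _ two_ne_zero]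
    norm_num
    module
  · have hsin := sin_two_mul_pi_div_pos h3
    have hS (n : ℤ) := S_two_mul_real_cos (2 * (Real.pi / M i j)) n
    generalize hm : M i j = m at *
    have hm0 : (m : ℝ) ≠ 0 := by
      have : m ≠ 0 := by lia
      exact_mod_cast this
    set θ := Real.pi / m with hθ
    have hmθ : (m : ℝ) * θ = Real.pi := by rw [hθ]; field_simp
    obtain ⟨k, rfl | rfl⟩ := Nat.even_or_odd' m
    · have hzero : (S ℝ ((k : ℤ) - 1)).eval (2 * Real.cos (2 * θ)) = 0 := by
        have h := hS ((k : ℤ) - 1)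
        have harg : (((k : ℤ) - 1 : ℤ) + 1 : ℝ) * (2 * θ) = Real.pi := by
          rw [← hmθ]; push_cast; ring
        rw [harg, Real.sin_pi] at h
        exact (mul_eq_zero.mp h).resolve_right hsin.ne'
      rw [show (((2 * k : ℕ) : ℤ) - 2) / 2 = (k : ℤ) - 1 by lia,
        show (((2 * k : ℕ) : ℤ) - 1) / 2 = (k : ℤ) - 1 by lia, hzero]
      simp
    · have hzero : (S ℝ (k : ℤ)).eval (2 * Real.cos (2 * θ)) +
          (S ℝ ((k : ℤ) - 1)).eval (2 * Real.cos (2 * θ)) = 0 := by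
        have h := hS ((k : ℤ) - 1)
        have h' := hS (k : ℤ)
        have harg : (((k : ℤ) - 1 : ℤ) + 1 : ℝ) * (2 * θ) = Real.pi - θ := by
          rw [← hmθ]; push_cast; ring
        have harg' : (((k : ℤ) : ℝ) + 1) * (2 * θ) = θ + Real.pi := by
          rw [← hmθ]; push_cast; ring
        rw [harg, Real.sin_pi_sub] at h
        rw [harg', Real.sin_add_pi] at h'
        refine (mul_eq_zero.mp (?_ : _ * Real.sin (2 * θ) = 0)).resolve_right hsin.ne'
        rw [add_mul, h, h']
        ring
      rw [show (((2 * k + 1 : ℕ) : ℤ) - 2) / 2 = (k : ℤ) - 1 by lia,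
        show (((2 * k + 1 : ℕ) : ℤ) - 1) / 2 = (k : ℤ) by lia,
        show (((2 * k + 1 : ℕ) : ℤ) - 3) / 2 = (k : ℤ) - 1 by lia,
        show (((2 * k + 1 : ℕ) : ℤ)) / 2 = (k : ℤ) by lia, hzero]
      simp

open Polynomial.Chebyshev in
theorem geomReflection_mul_pow_ne_one {i j : B} (hij : Noncomm M i j) {k : ℕ} (hk : 0 < k)
    (hkM : M i j = 0 ∨ k < M i j) : (M.geomReflection i * M.geomReflection j) ^ k ≠ 1 := by
  intro h
  have hne : i ≠ j := by
    rintro rfl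
    have := M.diagonal i
    rcases hij with h | h <;> lia
  have formula := Module.reflection_mul_reflection_pow_apply_self (M.geomCoroot_self i)
    (M.geomCoroot_self j) k _ (M.geomCoroot_mul_geomCoroot_sub_two i j).symm
  change ((M.geomReflection i * M.geomReflection j) ^ k) _ = _ at formula
  rw [h] at formula
  have hx := DFunLike.congr_fun formula i
  have hy := DFunLike.congr_fun formula j
  simp [hne, hne.symm, geomCoroot_single, M.symmetric j i] at hx hy
  rcases hij with h0 | h3
  · simp [h0, S_eval_two] at hy
    lia
  · have hkm : k < M i j := by lia
    have hsin := sin_two_mul_pi_div_pos h3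
    have hS (n : ℤ) := S_two_mul_real_cos (2 * (Real.pi / M i j)) n
    have hcos := (cos_pi_div_pos h3).ne'
    generalize hm : M i j = m at *
    have hm0 : (0 : ℝ) < m := by
      have : 0 < m := by lia
      exact_mod_cast this
    set θ := Real.pi / m with hθ
    have hmθ : (m : ℝ) * θ = Real.pi := by rw [hθ]; field_simp
    have hS0 : (S ℝ ((k : ℤ) - 1)).eval (2 * Real.cos (2 * θ)) = 0 :=
      hy.resolve_right hcos
    have hS1 : (S ℝ (k : ℤ)).eval (2 * Real.cos (2 * θ)) = 1 := by
      rw [hS0] at hx; linarith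
    have h0 := hS ((k : ℤ) - 1)
    have h1 := hS (k : ℤ)
    rw [hS0, zero_mul] at h0
    rw [hS1, one_mul] at h1
    have h0' : Real.sin (k * (2 * θ)) = 0 := by
      rw [h0]; push_cast; ring_nf
    have h1' : Real.cos (k * (2 * θ)) = 1 := by
      rw [Int.cast_natCast, add_mul, one_mul, Real.sin_add, h0', zero_mul, zero_add] at h1
      exact (mul_right_cancel₀ hsin.ne' (by rw [one_mul]; exact h1)).symm
    have hθpos : 0 < θ := by rw [hθ]; exact div_pos Real.pi_pos hm0
    have hkR : (0 : ℝ) < k := by exact_mod_cast hk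
    have hkmR : (k : ℝ) < m := by exact_mod_cast hkm
    have := (Real.cos_eq_one_iff_of_lt_of_lt (by nlinarith [Real.pi_pos, mul_pos hkR hθpos])
      (by nlinarith)).mp h1'
    nlinarith [mul_pos hkR hθpos]

end CoxeterMatrix

namespace CoxeterSystem

theorem simple_mul_simple_pow_ne_one {i j : B} (hij : Noncomm M i j) {k : ℕ} (hk : 0 < k)
    (hkM : M i j = 0 ∨ k < M i j) : (cs.simple i * cs.simple j) ^ k ≠ 1 := by
  intro h
  apply M.geomReflection_mul_pow_ne_one hij hk hkM
  have := congrArg (cs.lift ⟨M.geomReflection, M.isLiftable_geomReflection⟩) h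
  simpa using this

open Classical in
/-- The action of a simple reflection on pairs (group element, sign) which detects inversions. -/
noncomputable def inversionStep (i : B) : Function.End (W × ZMod 2) := fun p =>
  (cs.simple i * p.1 * cs.simple i, p.2 + if p.1 = cs.simple i then 1 else 0)

open Classical in
theorem prod_map_inversionStep_apply (ω : List B) (p : W × ZMod 2) :
    (ω.map cs.inversionStep).prod p =
      (cs.wordProd ω * p.1 * (cs.wordProd ω)⁻¹,
        p.2 + ((cs.leftInvSeq ω).count (cs.wordProd ω * p.1 * (cs.wordProd ω)⁻¹) : ZMod 2)) := by
  induction ω with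
  | nil =>
    change p = _
    simp
  | cons i ω ih =>
    rw [List.map_cons, List.prod_cons]
    change cs.inversionStep i ((ω.map cs.inversionStep).prod p) = _
    rw [ih]
    set u := cs.wordProd ω * p.1 * (cs.wordProd ω)⁻¹ with hu
    have hconj : cs.wordProd (i :: ω) * p.1 * (cs.wordProd (i :: ω))⁻¹ =
        MulAut.conj (cs.simple i) u := by
      simp [wordProd_cons, hu, mul_assoc]
    have hself : MulAut.conj (cs.simple i) u = cs.simple i ↔ u = cs.simple i := by
      simp [MulAut.conj_apply, mul_assoc, mul_eq_one_iff_eq_inv]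
    rw [hconj]
    simp only [leftInvSeq, inversionStep, List.count_cons,
      List.count_map_of_injective _ _ (MulAut.conj (cs.simple i)).injective]
    ext
    · simp
    · simp only [beq_iff_eq, eq_comm (a := cs.simple i), hself]
      push_cast
      ring

theorem prod_map_alternatingWord {G : Type*} [Monoid G] (f : B → G) (i j : B) (m : ℕ) :
    ((alternatingWord i j (2 * m)).map f).prod = (f i * f j) ^ m := by
  induction m with
  | zero => simp [alternatingWord]
  | succ m ih =>
    rw [show 2 * (m + 1) = 2 * m + 1 + 1 by ring, alternatingWord_succ', alternatingWord_succ']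
    simp [ih, pow_succ', mul_assoc]

theorem wordProd_alternatingWord_two_mul_add_one (i j : B) (k : ℕ) :
    cs.wordProd (alternatingWord j i (2 * k + 1)) =
      cs.simple i * (cs.simple j * cs.simple i) ^ k := by
  rw [prod_alternatingWord_eq_mul_pow]
  have : (2 * k + 1) / 2 = k := by lia
  simp [this]

/-- The inversion sequence of the word `(i j) ^ M i j` is a sequence repeated twice. -/
theorem drop_leftInvSeq_alternatingWord (i j : B) :
    (cs.leftInvSeq (alternatingWord i j (2 * M i j))).drop (M i j) =
      (cs.leftInvSeq (alternatingWord i j (2 * M i j))).take (M i j) := by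
  apply List.ext_getElem
  · simp; lia
  · intro n h₁ h₂
    simp at h₁ h₂
    rw [List.getElem_drop, List.getElem_take,
      cs.getElem_leftInvSeq_alternatingWord i j (M i j) _ (by lia),
      cs.getElem_leftInvSeq_alternatingWord i j (M i j) _ (by lia),
      wordProd_alternatingWord_two_mul_add_one, wordProd_alternatingWord_two_mul_add_one,
      pow_add, simple_mul_simple_pow', one_mul]

theorem isLiftable_inversionStep : M.IsLiftable cs.inversionStep := by
  classical
  intro i j
  rw [← prod_map_alternatingWord]
  funext p
  change _ = p
  have hprod : cs.wordProd (alternatingWord i j (2 * M i j)) = 1 := by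
    rw [wordProd, prod_map_alternatingWord, simple_mul_simple_pow]
  rw [prod_map_inversionStep_apply, hprod,
    ← List.take_append_drop (M i j) (cs.leftInvSeq (alternatingWord i j (2 * M i j))),
    drop_leftInvSeq_alternatingWord, List.count_append]
  ext
  · simp
  · simp [CharTwo.add_self_eq_zero]

open Classical in
/-- The parity of the number of occurrences of `t` in an inversion sequence depends only on the
product of the word. -/
theorem count_leftInvSeq_eq {ω ω' : List B} (h : cs.wordProd ω = cs.wordProd ω') (t : W) :
    ((cs.leftInvSeq ω).count t : ZMod 2) = (cs.leftInvSeq ω').count t := by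
  have key (η : List B) : cs.lift ⟨_, cs.isLiftable_inversionStep⟩ (cs.wordProd η) =
      (η.map cs.inversionStep).prod := by
    rw [wordProd, map_list_prod, List.map_map]
    congr 2
    funext i
    exact cs.lift_apply_simple cs.isLiftable_inversionStep i
  have heq : (ω.map cs.inversionStep).prod = (ω'.map cs.inversionStep).prod := by
    rw [← key, ← key, h]
  have := congrArg Prod.snd (congrFun heq ((cs.wordProd ω)⁻¹ * t * cs.wordProd ω, 0))
  rw [prod_map_inversionStep_apply, prod_map_inversionStep_apply, ← h] at this
  simpa [mul_assoc] using this

/-- The exchange property: a left descent occurs in every inversion sequence. -/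
theorem simple_mem_leftInvSeq_of_isLeftDescent {ω : List B} {i : B}
    (h : cs.IsLeftDescent (cs.wordProd ω) i) : cs.simple i ∈ cs.leftInvSeq ω := by
  classical
  obtain ⟨ω', hred, hω'⟩ := cs.exists_isReduced (cs.simple i * cs.wordProd ω)
  have hprod : cs.wordProd ω = cs.wordProd (i :: ω') := by
    rw [wordProd_cons, ← hω', simple_mul_simple_cancel_left]
  have hnot : cs.simple i ∉ cs.leftInvSeq ω' := by
    intro hmem
    have hlt := (cs.isLeftInversion_of_mem_leftInvSeq hred hmem).2
    rw [← hω', simple_mul_simple_cancel_left] at hlt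
    exact absurd h (not_lt.mpr hlt.le)
  have hcount : (cs.leftInvSeq (i :: ω')).count (cs.simple i) = 1 := by
    have hconj : MulAut.conj (cs.simple i) (cs.simple i) = cs.simple i := by simp
    have hmap := List.count_map_of_injective (cs.leftInvSeq ω') _
      (MulAut.conj (cs.simple i)).injective (cs.simple i)
    rw [hconj, List.count_eq_zero.mpr hnot] at hmap
    rw [leftInvSeq, List.count_cons_self, hmap]
  by_contra hmem
  have := cs.count_leftInvSeq_eq hprod (cs.simple i)
  rw [hcount, List.count_eq_zero.mpr hmem] at this
  simp at this

theorem exists_pow_of_mem_leftInvSeq_alternatingWord (s t : B) (k : ℕ) {x : W}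
    (hx : x ∈ cs.leftInvSeq (alternatingWord s t k)) :
    ∃ j < k, x = if Even k then cs.simple s * (cs.simple t * cs.simple s) ^ j
      else cs.simple t * (cs.simple s * cs.simple t) ^ j := by
  induction k generalizing x with
  | zero => simp [alternatingWord] at hx
  | succ k ih =>
    rw [alternatingWord_succ', leftInvSeq, List.mem_cons, List.mem_map] at hx
    rcases hx with rfl | ⟨y, hy, rfl⟩
    · refine ⟨0, by lia, ?_⟩
      by_cases hk : Even k <;> simp [hk, Nat.even_add_one]
    · obtain ⟨j, hj, rfl⟩ := ih hy
      have conj (a b : B) : cs.simple a * (cs.simple b * (cs.simple a * cs.simple b) ^ j) *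
          cs.simple a = cs.simple a * (cs.simple b * cs.simple a) ^ (j + 1) := by
        rw [mul_assoc, mul_assoc, mul_pow_mul, pow_succ', mul_assoc]
      refine ⟨j + 1, by lia, ?_⟩
      by_cases hk : Even k <;> simp [hk, Nat.even_add_one, conj]

/-- An element with left descents `s` and `t` is divisible on the left by every alternating word
in `s` and `t` of length at most `M s t`. -/
theorem exists_eq_alternatingWord_mul {w : W} {s t : B} (hst : Noncomm M s t)
    (hs : cs.IsLeftDescent w s) (ht : cs.IsLeftDescent w t) (k : ℕ)
    (hk : M s t = 0 ∨ k ≤ M s t) :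
    ∃ v, w = cs.wordProd (alternatingWord s t k) * v ∧ cs.length w = k + cs.length v := by
  induction k with
  | zero => exact ⟨w, by simp [alternatingWord]⟩
  | succ k ih =>
    obtain ⟨v, hv, hlen⟩ := ih (by lia)
    obtain ⟨β, hβ, rfl⟩ := cs.exists_isReduced v
    set c := if Even k then t else s with hc
    have hcw : cs.IsLeftDescent w c := by
      by_cases hk : Even k <;> simp [hc, hk, hs, ht]
    have hword : w = cs.wordProd (alternatingWord s t k ++ β) := by rw [wordProd_append, hv]
    have hmem := cs.simple_mem_leftInvSeq_of_isLeftDescent (hword ▸ hcw)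
    obtain ⟨n, hn, hget⟩ := List.mem_iff_getElem.mp hmem
    rw [length_leftInvSeq, List.length_append, length_alternatingWord] at hn
    have hnk : k ≤ n := by
      by_contra! hnk
      have hmem' : cs.simple c ∈ cs.leftInvSeq (alternatingWord s t k) := by
        have htake := cs.leftInvSeq_take (alternatingWord s t k ++ β) k
        rw [List.take_left' (by simp)] at htake
        rw [htake, ← hget]
        exact List.mem_take_iff_getElem.mpr ⟨n, by simp; lia, rfl⟩
      obtain ⟨j, hj, hx⟩ := cs.exists_pow_of_mem_leftInvSeq_alternatingWord s t k hmem'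
      have hne := cs.simple_mul_simple_pow_ne_one hst (k := j + 1) (by lia) (by lia)
      have hts : Noncomm M t s := by rwa [Noncomm, M.symmetric t s]
      have hne' := cs.simple_mul_simple_pow_ne_one hts (k := j + 1) (by lia)
        (by rw [M.symmetric t s]; lia)
      by_cases hk : Even k
      · simp only [hc, hk, if_true] at hx
        apply hne'
        rw [pow_succ', mul_assoc, ← hx, simple_mul_simple_self]
      · simp only [hc, hk, if_false] at hx
        apply hne
        rw [pow_succ', mul_assoc, ← hx, simple_mul_simple_self]
    have hexch := cs.getD_leftInvSeq_mul_wordProd (alternatingWord s t k ++ β) n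
    rw [List.getD_eq_getElem _ _ (by simp; lia), hget, ← hword,
      List.eraseIdx_append_of_length_le (by simpa using hnk), length_alternatingWord,
      wordProd_append] at hexch
    have hw' : w = cs.wordProd (alternatingWord s t (k + 1)) *
        cs.wordProd (β.eraseIdx (n - k)) := by
      rw [alternatingWord_succ', ← hc, wordProd_cons, mul_assoc, ← hexch,
        simple_mul_simple_cancel_left]
    refine ⟨_, hw', ?_⟩
    have h₁ := cs.length_mul_le (cs.wordProd (alternatingWord s t (k + 1)))
      (cs.wordProd (β.eraseIdx (n - k)))
    rw [← hw'] at h₁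
    have h₂ := cs.length_wordProd_le (alternatingWord s t (k + 1))
    rw [length_alternatingWord] at h₂
    have h₃ := cs.length_wordProd_le (β.eraseIdx (n - k))
    rw [List.length_eraseIdx_of_lt (by lia)] at h₃
    rw [hβ.eq] at hlen
    lia

theorem longest_inv (s t : B) : (longest cs s t)⁻¹ = longest cs s t := by
  rw [longest, inv_eq_iff_mul_eq_one]
  obtain ⟨k, hk | hk⟩ := Nat.even_or_odd' (M s t)
  · rw [hk, wordProd, prod_map_alternatingWord, ← pow_add, ← two_mul, ← hk,
      simple_mul_simple_pow]
  · rw [hk, wordProd_alternatingWord_two_mul_add_one]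
    have hinv : cs.simple t * cs.simple s = (cs.simple s * cs.simple t)⁻¹ := by simp
    nth_rw 1 [← mul_pow_mul]
    rw [mul_assoc, simple_mul_simple_cancel_left, hinv, inv_pow, inv_mul_cancel]

end CoxeterSystem

theorem IsComplex.inv {cs : CoxeterSystem M W} {w : W} (h : IsComplex cs w) : IsComplex cs w⁻¹ := by
  obtain ⟨s, t, hst, x, y, rfl, hlen⟩ := h
  refine ⟨s, t, hst, y⁻¹, x⁻¹, ?_, ?_⟩
  · simp [mul_assoc, cs.longest_inv]
  · rw [cs.length_inv, cs.length_inv, cs.length_inv, hlen]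
    ring

theorem FullyComm.not_isLeftDescent_and {cs : CoxeterSystem M W} {w : W}
    (hw : FullyComm cs w) {s t : B} (hst : Noncomm M s t) :
    ¬ (cs.IsLeftDescent w s ∧ cs.IsLeftDescent w t) := by
  rintro ⟨hs, ht⟩
  by_cases h0 : M s t = 0
  · obtain ⟨v, -, hlen⟩ := cs.exists_eq_alternatingWord_mul hst hs ht (cs.length w + 1) (.inl h0)
    lia
  · obtain ⟨v, hv, hlen⟩ := cs.exists_eq_alternatingWord_mul hst hs ht (M s t) (.inr le_rfl)
    refine hw ⟨s, t, hst.resolve_left h0, 1, v, by rw [one_mul]; exact hv, ?_⟩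
    have h₁ := cs.length_wordProd_le (alternatingWord s t (M s t))
    have h₂ := cs.length_mul_le (cs.wordProd (alternatingWord s t (M s t))) v
    rw [← hv] at h₂
    rw [length_alternatingWord] at h₁
    rw [cs.length_one, longest]
    lia

/-- If `w` is fully commutative then the elements of `𝓛(w)` pairwise commute and the
elements of `𝓡(w)` pairwise commute: for `s, t ∈ S` with `m(s,t) ≥ 3` it is impossible
that both `ℓ(sw) < ℓ(w)` and `ℓ(tw) < ℓ(w)`, and likewise on the right. -/
theorem statement4 (w : W) (hw : FullyComm cs w) (s t : B) (hst : Noncomm M s t) :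
    ¬ (cs.IsLeftDescent w s ∧ cs.IsLeftDescent w t) ∧
    ¬ (cs.IsRightDescent w s ∧ cs.IsRightDescent w t) := by
  refine ⟨hw.not_isLeftDescent_and hst, ?_⟩
  have hw' : FullyComm cs w⁻¹ := fun h => hw (inv_inv w ▸ h.inv)
  simpa only [cs.isLeftDescent_inv_iff] using hw'.not_isLeftDescent_and hst
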